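/- Let e₁, e₂, e₃ be orthonormal vectors in E, let φ ∈ (0,π/2), and set v = sin φ e₂ + cos φ e₃. Then the curve ζ(t) = −sin φ sinh(t/2) e₁ + (cos²φ cosh(t/2) + sin²φ cosh t) e₂ − sin φ cos φ (cosh(t/2) − cosh t) e₃ satisfies the Jacobi equation 4ζ''(t) − ζ(t) − 3⟨ζ(t),v⟩v = 0 for all t ∈ ℝ, with initial conditions ζ(0) = e₂ and ζ'(0) = −(1/2)(sin φ) e₁. (This is the Jacobi field ζ_{P̄ξ} along a normal geodesic to W_w, written in the parallel frame (Z, P̄ξ, F̄ξ) with v representing Jξ.) -/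

import Mathlib

/- Context: `E` is a real inner product space with a fixed unit vector `v`
(representing `Jγ̇` in a parallel orthonormal frame along a unit-speed geodesic `γ`
of `ℂH^n` of constant holomorphic sectional curvature `−1`). A smooth curve
`ζ : ℝ → E` satisfies the Jacobi equation of `ℂH^n` if
`4ζ'' − ζ − 3⟨ζ,v⟩v = 0`. -/

open scoped RealInnerProductSpace
open Real

/-! On a complex hyperbolic space the Jacobi equation reads `ζ'' = A ζ` with a constant self-adjoint
operator `A`, which is the identity on the line through `v` and `1/4` on its orthogonal complement.
Hence the component of a solution along `v` is a combination of `cosh t` and `sinh t`, and the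
orthogonal component one of `cosh (t / 2)` and `sinh (t / 2)`. The curve in question is the solution
with initial value `e₂` and initial velocity `-(1/2) (sin φ) e₁`, since `⟪e₂, v⟫ = sin φ` and
`⟪e₁, v⟫ = 0`. -/

section JacobiField

variable {E : Type*} [NormedAddCommGroup E] [InnerProductSpace ℝ E] {v : E}

/-- The operator `A = -R(·, γ̇)γ̇` of the Jacobi equation `ζ'' = A ζ`, on vectors orthogonal to `γ̇`
in a parallel frame, where `v` is the unit vector `Jγ̇`. The sign makes it positive. -/
noncomputable def negJacobiOperator (v x : E) : E :=
  (4⁻¹ : ℝ) • (x + (3 * ⟪x, v⟫) • v)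

/-- The solution of the Jacobi equation with initial value `x` and initial velocity `y`, for a unit
vector `v`: the first two terms are orthogonal to `v`, the last one is parallel to it. -/
noncomputable def jacobiField (v x y : E) (t : ℝ) : E :=
  cosh (t / 2) • (x - ⟪x, v⟫ • v) + (2 * sinh (t / 2)) • (y - ⟪y, v⟫ • v)
    + (⟪x, v⟫ * cosh t + ⟪y, v⟫ * sinh t) • v

theorem jacobiField_zero (x y : E) : jacobiField v x y 0 = x := by
  simp [jacobiField]

theorem inner_negJacobiOperator (hv : ‖v‖ = 1) (x : E) :
    ⟪negJacobiOperator v x, v⟫ = ⟪x, v⟫ := by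
  rw [negJacobiOperator, real_inner_smul_left, inner_add_left, real_inner_smul_left,
    inner_self_eq_one_of_norm_eq_one hv]
  ring

theorem inner_jacobiField (hv : ‖v‖ = 1) (x y : E) (t : ℝ) :
    ⟪jacobiField v x y t, v⟫ = ⟪x, v⟫ * cosh t + ⟪y, v⟫ * sinh t := by
  simp only [jacobiField, inner_add_left, inner_sub_left, real_inner_smul_left,
    inner_self_eq_one_of_norm_eq_one hv]
  ring

theorem negJacobiOperator_jacobiField (hv : ‖v‖ = 1) (x y : E) (t : ℝ) :
    negJacobiOperator v (jacobiField v x y t) =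
      jacobiField v (negJacobiOperator v x) (negJacobiOperator v y) t := by
  rw [negJacobiOperator, inner_jacobiField hv]
  simp only [jacobiField, inner_negJacobiOperator hv]
  simp only [negJacobiOperator]
  module

theorem hasDerivAt_jacobiField (hv : ‖v‖ = 1) (x y : E) (t : ℝ) :
    HasDerivAt (jacobiField v x y) (jacobiField v y (negJacobiOperator v x) t) t := by
  have hcosh_half : HasDerivAt (fun s : ℝ => cosh (s / 2)) (sinh (t / 2) * (1 / 2)) t :=
    ((hasDerivAt_id t).div_const 2).cosh
  have hsinh_half : HasDerivAt (fun s : ℝ => sinh (s / 2)) (cosh (t / 2) * (1 / 2)) t :=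
    ((hasDerivAt_id t).div_const 2).sinh
  have hparallel : HasDerivAt (fun s => ⟪x, v⟫ * cosh s + ⟪y, v⟫ * sinh s)
      (⟪x, v⟫ * sinh t + ⟪y, v⟫ * cosh t) t :=
    ((hasDerivAt_cosh t).const_mul _).add ((hasDerivAt_sinh t).const_mul _)
  refine (((hcosh_half.smul_const (x - ⟪x, v⟫ • v)).add
    ((hsinh_half.const_mul 2).smul_const (y - ⟪y, v⟫ • v))).add
    (hparallel.smul_const v)).congr_deriv ?_
  rw [jacobiField, inner_negJacobiOperator hv, negJacobiOperator]
  module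

theorem deriv_jacobiField (hv : ‖v‖ = 1) (x y : E) :
    deriv (jacobiField v x y) = jacobiField v y (negJacobiOperator v x) :=
  funext fun t => (hasDerivAt_jacobiField hv x y t).deriv

theorem deriv_deriv_jacobiField (hv : ‖v‖ = 1) (x y : E) (t : ℝ) :
    deriv (deriv (jacobiField v x y)) t = negJacobiOperator v (jacobiField v x y t) := by
  rw [deriv_jacobiField hv, deriv_jacobiField hv, negJacobiOperator_jacobiField hv]

theorem norm_sin_smul_add_cos_smul {a b : E} (ha : ‖a‖ = 1) (hb : ‖b‖ = 1) (hab : ⟪a, b⟫ = 0)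
    (φ : ℝ) : ‖sin φ • a + cos φ • b‖ = 1 := by
  have hsq : ‖sin φ • a + cos φ • b‖ ^ 2 = 1 := by
    rw [norm_add_sq_real, real_inner_smul_left, real_inner_smul_right, hab, norm_smul, norm_smul,
      ha, hb]
    simp
  exact (pow_eq_one_iff_of_nonneg (norm_nonneg _) two_ne_zero).mp hsq

theorem jacobiField_sin_smul_add_cos_smul {e₁ e₂ e₃ : E} (h2 : ‖e₂‖ = 1)
    (h12 : ⟪e₁, e₂⟫ = 0) (h13 : ⟪e₁, e₃⟫ = 0) (h23 : ⟪e₂, e₃⟫ = 0) (φ t : ℝ) :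
    jacobiField (sin φ • e₂ + cos φ • e₃) e₂ (-((2⁻¹ * sin φ) • e₁)) t =
      -(sin φ * sinh (t / 2)) • e₁
        + (cos φ ^ 2 * cosh (t / 2) + sin φ ^ 2 * cosh t) • e₂
        - (sin φ * cos φ * (cosh (t / 2) - cosh t)) • e₃ := by
  have hvalue : ⟪e₂, sin φ • e₂ + cos φ • e₃⟫ = sin φ := by
    simp [inner_add_right, real_inner_smul_right, h2, h23]
  have hvelocity : ⟪-((2⁻¹ * sin φ) • e₁), sin φ • e₂ + cos φ • e₃⟫ = 0 := by
    simp [inner_add_right, real_inner_smul_left, real_inner_smul_right, h12, h13]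
  rw [jacobiField, hvalue, hvelocity, cos_sq']
  module

end JacobiField

theorem jacobi_field_P_general {E : Type*} [NormedAddCommGroup E]
    [InnerProductSpace ℝ E] {e₁ e₂ e₃ : E} (h2 : ‖e₂‖ = 1) (h3 : ‖e₃‖ = 1)
    (h12 : ⟪e₁, e₂⟫ = 0) (h13 : ⟪e₁, e₃⟫ = 0) (h23 : ⟪e₂, e₃⟫ = 0)
    {φ : ℝ} {v : E} (hv : v = sin φ • e₂ + cos φ • e₃) {ζ : ℝ → E}
    (hζ : ∀ t, ζ t = -(sin φ * sinh (t / 2)) • e₁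
      + (cos φ ^ 2 * cosh (t / 2) + sin φ ^ 2 * cosh t) • e₂
      - (sin φ * cos φ * (cosh (t / 2) - cosh t)) • e₃) :
    (∀ t : ℝ, (4 : ℝ) • deriv (deriv ζ) t - ζ t - (3 : ℝ) • ⟪ζ t, v⟫ • v = 0) ∧
    ζ 0 = e₂ ∧ deriv ζ 0 = -((2⁻¹ * sin φ) • e₁) := by
  have hv_norm : ‖v‖ = 1 := hv ▸ norm_sin_smul_add_cos_smul h2 h3 h23 φ
  obtain rfl : ζ = jacobiField v e₂ (-((2⁻¹ * sin φ) • e₁)) := by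
    funext t
    rw [hζ, hv, jacobiField_sin_smul_add_cos_smul h2 h12 h13 h23]
  refine ⟨fun t => ?_, jacobiField_zero _ _, ?_⟩
  · rw [deriv_deriv_jacobiField hv_norm, negJacobiOperator]
    module
  · rw [deriv_jacobiField hv_norm, jacobiField_zero]

/-- let `e₁, e₂, e₃` be orthonormal vectors in `E`, `φ ∈ (0,π/2)`,
and `v = sin φ e₂ + cos φ e₃`. Then
`ζ(t) = −sin φ sinh(t/2) e₁ + (cos²φ cosh(t/2) + sin²φ cosh t) e₂
− sin φ cos φ (cosh(t/2) − cosh t) e₃` satisfies the Jacobi equation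
`4ζ''(t) − ζ(t) − 3⟨ζ(t),v⟩v = 0` for all `t ∈ ℝ`, with `ζ(0) = e₂` and
`ζ'(0) = −(1/2)(sin φ) e₁`. (This is the Jacobi field `ζ_{P̄ξ}` along a normal
geodesic to `W_w`, in the parallel frame `(Z, P̄ξ, F̄ξ)`, `v` representing `Jξ`.) -/
theorem jacobi_field_P (E : Type*) [NormedAddCommGroup E]
    [InnerProductSpace ℝ E] (e₁ e₂ e₃ : E)
    (h1 : ‖e₁‖ = 1) (h2 : ‖e₂‖ = 1) (h3 : ‖e₃‖ = 1)
    (h12 : ⟪e₁, e₂⟫ = 0) (h13 : ⟪e₁, e₃⟫ = 0) (h23 : ⟪e₂, e₃⟫ = 0)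
    (φ : ℝ) (hφ : φ ∈ Set.Ioo 0 (π / 2)) (v : E)
    (hv : v = sin φ • e₂ + cos φ • e₃) (ζ : ℝ → E)
    (hζ : ∀ t, ζ t = -(sin φ * sinh (t / 2)) • e₁
      + (cos φ ^ 2 * cosh (t / 2) + sin φ ^ 2 * cosh t) • e₂
      - (sin φ * cos φ * (cosh (t / 2) - cosh t)) • e₃) :
    (∀ t : ℝ, (4 : ℝ) • deriv (deriv ζ) t - ζ t - (3 : ℝ) • ⟪ζ t, v⟫ • v = 0) ∧
    ζ 0 = e₂ ∧ deriv ζ 0 = -((2⁻¹ * sin φ) • e₁) :=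
  jacobi_field_P_general h2 h3 h12 h13 h23 hv hζ
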